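/- Suppose M is uniformly continuous and let M ∈ Ẽ(M). Then there exist Λ ∈ E(M) ∪ {0} and Λ_⊥ ∈ E_⊥(M) ∪ {0} such that M = M(G)·Λ + (1 − M(G))·Λ_⊥, and this decomposition is unique if 0 < M(G) < 1. -/

import Mathlib

open MeasureTheory Filter Topology
open scoped ENNReal NNReal Classical

noncomputable section

/-- A countable Markov system `(K_{i(e)}, w_e, p_e)_{e ∈ E}` on a metric space `K`:
a partition `(K_j)_{j ∈ N}` of `K` into nonempty Borel sets, source and target maps
`i, t : E → N` (`i` surjective), and for each `e ∈ E` Borel maps `w_e` and probability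
functions `p_e` (extended by zero outside `K_{i(e)}`) with
`∑_{e, i(e)=j} p_e(y) = 1` for `y ∈ K_j`. -/
structure MarkovSystem (K : Type*) [MetricSpace K] [MeasurableSpace K]
    (N : Type*) (E : Type*) where
  Kset : N → Set K
  Kset_nonempty : ∀ j, (Kset j).Nonempty
  Kset_measurable : ∀ j, MeasurableSet (Kset j)
  Kset_disjoint : Pairwise (Function.onFun Disjoint Kset)
  Kset_cover : (⋃ j, Kset j) = Set.univ
  i : E → N
  t : E → N
  i_surj : Function.Surjective i
  w : E → K → K
  p : E → K → ℝ
  w_measurable : ∀ e, Measurable (w e)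
  p_measurable : ∀ e, Measurable (p e)
  p_nonneg : ∀ e x, 0 ≤ p e x
  p_le_one : ∀ e x, p e x ≤ 1
  p_zero_outside : ∀ e x, x ∉ Kset (i e) → p e x = 0
  w_mapsTo : ∀ e, Set.MapsTo (w e) (Kset (i e)) (Kset (t e))
  p_pos_somewhere : ∀ e, ∃ x ∈ Kset (i e), 0 < p e x
  p_tsum_one : ∀ j, ∀ x ∈ Kset j, (∑' e : {e : E // i e = j}, p e.val x) = 1

/-- `Ē = E ∪ {∞}` (one-point compactification); with `E` countable its Borel σ-algebra
consists of all subsets. -/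
instance optionMeasurableSpace (E : Type*) : MeasurableSpace (Option E) := ⊤

/-- The code space `Σ̄ = Ē^ℤ`, carrying the product σ-algebra. -/
abbrev CodeSpace (E : Type*) : Type _ := ℤ → Option E

/-- The left shift `S` on the code space, `(Sσ)_{k-1} = σ_k`. -/
def shiftMap (E : Type*) : CodeSpace E → CodeSpace E := fun σ k => σ (k + 1)

/-- The cylinder set `_m[es₀, …, es_{n}] = {σ : σ_{m+k} = es_k}`. -/
def cylSetL {E : Type*} (m : ℤ) (es : List (Option E)) : Set (CodeSpace E) :=
  {σ | ∀ (k : ℕ) (h : k < es.length), σ (m + (k : ℤ)) = es.get ⟨k, h⟩}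

/-- The σ-algebra `𝓕` generated by the cylinder sets `_m[e_m, …, e_0]`, `m ≤ 0`. -/
def pastAlgebra (E : Type*) : MeasurableSpace (CodeSpace E) :=
  MeasurableSpace.generateFrom
    {A | ∃ es : List (Option E), es ≠ [] ∧ A = cylSetL (1 - (es.length : ℤ)) es}

/-- The conditional entropy `h_S(Λ) = H_Λ((_1[e])_{e ∈ Ē} | 𝓕)`. -/
def entropyS {E : Type*} (Λ : Measure (CodeSpace E)) : ℝ≥0∞ :=
  ∑' eo : Option E,
    ∫⁻ σ, ENNReal.ofReal
        (Real.negMulLog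
          ((Λ[Set.indicator {τ : CodeSpace E | τ 1 = eo} (fun _ => (1 : ℝ)) | pastAlgebra E]) σ)) ∂Λ

namespace MarkovSystem

variable {K : Type*} [MetricSpace K] [MeasurableSpace K] {N E : Type*}

/-- The Markov operator `Uf = ∑_e p_e · (f ∘ w_e)` acting on nonnegative Borel functions. -/
def markovOp (M : MarkovSystem K N E) (f : K → ℝ≥0∞) : K → ℝ≥0∞ :=
  fun x => ∑' e : E, ENNReal.ofReal (M.p e x) * f (M.w e x)

/-- The adjoint operator `U*` acting on measures, `(U*ν)(B) = ∫ U(1_B) dν`. -/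
def adjOp (M : MarkovSystem K N E) (ν : Measure K) : Measure K :=
  Measure.sum fun e : E =>
    Measure.map (M.w e) (ν.withDensity fun x => ENNReal.ofReal (M.p e x))

/-- `μ ∈ P(M)`: `μ` is an invariant Borel probability measure, `U*μ = μ`. -/
def IsInvariantMeasure (M : MarkovSystem K N E) (μ : Measure K) : Prop :=
  IsProbabilityMeasure μ ∧ M.adjOp μ = μ

/-- The path space `Σ_G`: all coordinates lie in `E` and `i(σ_{n+1}) = t(σ_n)`. -/
def pathSpace (M : MarkovSystem K N E) : Set (CodeSpace E) :=
  {σ | ∀ n : ℤ, ∃ e e' : E, σ n = some e ∧ σ (n + 1) = some e' ∧ M.i e' = M.t e}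

/-- `T_j = {σ ∈ Σ_G : t(σ_0) = j}`. -/
def Tset (M : MarkovSystem K N E) (j : N) : Set (CodeSpace E) :=
  {σ | σ ∈ M.pathSpace ∧ ∃ e : E, σ 0 = some e ∧ M.t e = j}

/-- `w` extended to `Ē`, with `w_∞ = id`. -/
def wext (M : MarkovSystem K N E) : Option E → K → K := fun o => o.elim id M.w

/-- `p` extended to `Ē`, with `p_∞ = 0`. -/
def pext (M : MarkovSystem K N E) : Option E → K → ℝ := fun o => o.elim (fun _ => 0) M.p

/-- `i` extended to `Ē`, with `i(∞) = j₀`. -/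
def iext (M : MarkovSystem K N E) (j0 : N) : Option E → N := fun o => o.elim j0 M.i

/-- `t` extended to `Ē`, with `t(∞) = j₀`. -/
def text (M : MarkovSystem K N E) (j0 : N) : Option E → N := fun o => o.elim j0 M.t

/-- `iterW M σ n y = w_{σ_0} ∘ w_{σ_{-1}} ∘ ⋯ ∘ w_{σ_{-n}} (y)`. -/
def iterW (M : MarkovSystem K N E) (σ : CodeSpace E) : ℕ → K → K
  | 0, y => M.wext (σ 0) y
  | n + 1, y => M.iterW σ n (M.wext (σ (-(n + 1 : ℤ))) y)

/-- `orbit M j0 xp σ n = w_{σ_0} ∘ ⋯ ∘ w_{σ_{-n}} (x_{i(σ_{-n})})`. -/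
def orbit (M : MarkovSystem K N E) (j0 : N) (xp : N → K) (σ : CodeSpace E) (n : ℕ) : K :=
  M.iterW σ n (xp (M.iext j0 (σ (-(n : ℤ)))))

/-- `D`: the set of `σ ∈ Σ_G` for which `lim_{m → -∞} w_{σ_0} ∘ ⋯ ∘ w_{σ_m}(x_{i(σ_m)})` exists. -/
def codeDomain (M : MarkovSystem K N E) (j0 : N) (xp : N → K) : Set (CodeSpace E) :=
  {σ | σ ∈ M.pathSpace ∧ ∃ l : K, Tendsto (fun n : ℕ => M.orbit j0 xp σ n) atTop (𝓝 l)}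

/-- The coding map `F`: the above limit on `D`, and `x_{t(σ_0)}` elsewhere. -/
def code (M : MarkovSystem K N E) (j0 : N) (xp : N → K) (σ : CodeSpace E) : K :=
  if h : σ ∈ M.codeDomain j0 xp then h.2.choose else xp (M.text j0 (σ 0))

/-- `Λ ∈ E(M)`: `Λ` is a shift-invariant Borel probability measure with `Λ(D) = 1` and
`E_Λ(1_{_1[e]} | 𝓕) = p_e ∘ F` `Λ`-a.e. for every `e ∈ E` (an equilibrium state). -/
def IsEquilibrium (M : MarkovSystem K N E) (j0 : N) (xp : N → K)
    (Λ : Measure (CodeSpace E)) : Prop :=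
  IsProbabilityMeasure Λ ∧ Measure.map (shiftMap E) Λ = Λ ∧
    Λ (M.codeDomain j0 xp) = 1 ∧
    ∀ e : E,
      (Λ[Set.indicator {σ : CodeSpace E | σ 1 = some e} (fun _ => (1 : ℝ)) | pastAlgebra E])
        =ᵐ[Λ] fun σ => M.p e (M.code j0 xp σ)

/-- `pbar` is the family of continuous extensions `p̄_e` of `p_e|_{K_{i(e)}}` to the closure
of `K_{i(e)}`, extended further by zero on `K`. -/
def IsUCExtensionP (M : MarkovSystem K N E) (pbar : E → K → ℝ) : Prop :=
  ∀ e : E, ContinuousOn (pbar e) (closure (M.Kset (M.i e))) ∧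
    (∀ x ∈ M.Kset (M.i e), pbar e x = M.p e x) ∧
    (∀ x, x ∉ closure (M.Kset (M.i e)) → pbar e x = 0)

/-- `wb` is a family of continuous extensions `w̄_e` of `w_e|_{K_{i(e)}}` to the closure
of `K_{i(e)}`. -/
def IsUCExtensionW (M : MarkovSystem K N E) (wb : E → K → K) : Prop :=
  ∀ e : E, ContinuousOn (wb e) (closure (M.Kset (M.i e))) ∧
    (∀ x ∈ M.Kset (M.i e), wb e x = M.w e x)

/-- The Markov system is uniformly continuous: each `w_e|_{K_{i(e)}}` and `p_e|_{K_{i(e)}}`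
is uniformly continuous. -/
def IsUniformlyContinuous (M : MarkovSystem K N E) : Prop :=
  ∀ e : E, UniformContinuousOn (M.w e) (M.Kset (M.i e)) ∧
    UniformContinuousOn (M.p e) (M.Kset (M.i e))

/-- `∂p_e = p̄_e · 1_{cl(K_{i(e)}) \ K_{i(e)}}`. -/
def dp (M : MarkovSystem K N E) (pbar : E → K → ℝ) (e : E) : K → ℝ :=
  Set.indicator (closure (M.Kset (M.i e)) \ M.Kset (M.i e)) (pbar e)

/-- `Λ ∈ Ẽ(M)` (asymptotic state): shift-invariant probability with `Λ(D) = 1` and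
`E_Λ(1_{_1[e]} | 𝓕) = (p̄_e ∘ F)·1_{T_{i(e)}}` `Λ`-a.e. for every `e`. -/
def IsAsymptotic (M : MarkovSystem K N E) (j0 : N) (xp : N → K) (pbar : E → K → ℝ)
    (Λ : Measure (CodeSpace E)) : Prop :=
  IsProbabilityMeasure Λ ∧ Measure.map (shiftMap E) Λ = Λ ∧
    Λ (M.codeDomain j0 xp) = 1 ∧
    ∀ e : E,
      (Λ[Set.indicator {σ : CodeSpace E | σ 1 = some e} (fun _ => (1 : ℝ)) | pastAlgebra E])
        =ᵐ[Λ] Set.indicator (M.Tset (M.i e)) (fun σ => pbar e (M.code j0 xp σ))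

/-- `Λ ∈ E_⊥(M)`: shift-invariant probability with `Λ(D) = 1` and
`E_Λ(1_{_1[e]} | 𝓕) = (∂p_e ∘ F)·1_{T_{i(e)}}` `Λ`-a.e. for every `e`. -/
def IsPerp (M : MarkovSystem K N E) (j0 : N) (xp : N → K) (pbar : E → K → ℝ)
    (Λ : Measure (CodeSpace E)) : Prop :=
  IsProbabilityMeasure Λ ∧ Measure.map (shiftMap E) Λ = Λ ∧
    Λ (M.codeDomain j0 xp) = 1 ∧
    ∀ e : E,
      (Λ[Set.indicator {σ : CodeSpace E | σ 1 = some e} (fun _ => (1 : ℝ)) | pastAlgebra E])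
        =ᵐ[Λ] Set.indicator (M.Tset (M.i e)) (fun σ => M.dp pbar e (M.code j0 xp σ))

/-- `G = ⋃_{k ≥ 0} ⋃_{j ∈ N} S^{-k}(F^{-1}(K_j) ∩ T_j)`. -/
def Gset (M : MarkovSystem K N E) (j0 : N) (xp : N → K) : Set (CodeSpace E) :=
  ⋃ (k : ℕ) (j : N), (shiftMap E)^[k] ⁻¹' ((M.code j0 xp) ⁻¹' (M.Kset j) ∩ M.Tset j)

/-- `M` is non-degenerate: for every asymptotic state `Λ` there is `i ∈ N` with
`Λ(T_i ∩ F^{-1}(K_i)) > 0`. -/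
def IsNonDegenerate (M : MarkovSystem K N E) (j0 : N) (xp : N → K) (pbar : E → K → ℝ) : Prop :=
  ∀ Λ : Measure (CodeSpace E), M.IsAsymptotic j0 xp pbar Λ →
    ∃ i : N, 0 < Λ (M.Tset i ∩ (M.code j0 xp) ⁻¹' (M.Kset i))

/-- `M` is consistent: `F(Λ) ∈ P(M)` for every asymptotic state `Λ`. -/
def IsConsistent (M : MarkovSystem K N E) (j0 : N) (xp : N → K) (pbar : E → K → ℝ) : Prop :=
  ∀ Λ : Measure (CodeSpace E), M.IsAsymptotic j0 xp pbar Λ →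
    M.IsInvariantMeasure (Measure.map (M.code j0 xp) Λ)

/-- `Rf = ∑_e ∂p_e · (f ∘ w̄_e)`. -/
def Rop (M : MarkovSystem K N E) (pbar : E → K → ℝ) (wb : E → K → K)
    (f : K → ℝ≥0∞) : K → ℝ≥0∞ :=
  fun x => ∑' e : E, ENNReal.ofReal (M.dp pbar e x) * f (wb e x)

/-- `Ω = ⋂_{n ≥ 1} {R^n 1 ≥ 1}`. -/
def OmegaSet (M : MarkovSystem K N E) (pbar : E → K → ℝ) (wb : E → K → K) : Set K :=
  ⋂ n : ℕ, {x : K | 1 ≤ (M.Rop pbar wb)^[n + 1] (fun _ => 1) x}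

/-- `ξ_j = ∑_{e, i(e) = j} sup_{x ∈ K_j} p_e(x)`. -/
def xi (M : MarkovSystem K N E) (j : N) : ℝ≥0∞ :=
  ∑' e : {e : E // M.i e = j}, ⨆ x ∈ M.Kset j, ENNReal.ofReal (M.p e.val x)

/-- `M` has a dominating Markov chain: `ξ_j < ∞` for all `j ∈ N`. -/
def HasDominatingChain (M : MarkovSystem K N E) : Prop := ∀ j : N, M.xi j ≠ ⊤

/-- `ξ_j · q_{j j'} = ∑_{e, i(e) = j, t(e) = j'} sup_{x ∈ K_j} p_e(x)`. -/
def xiq (M : MarkovSystem K N E) (j j' : N) : ℝ≥0∞ :=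
  ∑' e : {e : E // M.i e = j ∧ M.t e = j'}, ⨆ x ∈ M.Kset j, ENNReal.ofReal (M.p e.val x)

/-- `c = ∑_{j'} sup_j ξ_j q_{j j'}`. -/
def cConst (M : MarkovSystem K N E) : ℝ≥0∞ := ∑' j' : N, ⨆ j : N, M.xiq j j'

/-- `α^{x_0}_n({j}) = (1/n) ∑_{k=1}^n ((U*)^k δ_{x_0})(K_j)`. -/
def alphaMeas (M : MarkovSystem K N E) (x0 : K) (n : ℕ) (j : N) : ℝ≥0∞ :=
  (n : ℝ≥0∞)⁻¹ * ∑ k ∈ Finset.range n, (M.adjOp^[k + 1] (Measure.dirac x0)) (M.Kset j)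

/-- Condition (T) at `x_0`: the sequence `(α^{x_0}_n)_n` is uniformly tight. -/
def ConditionT (M : MarkovSystem K N E) (x0 : K) : Prop :=
  ∀ ε : ℝ, 0 < ε → ∃ V : Finset N,
    ∀ n : ℕ, (∑' j : {j : N // j ∉ V}, M.alphaMeas x0 (n + 1) j.val) < ENNReal.ofReal ε

/-- `M` is contractive with contraction rate `a`:
`∑_{e, i(e) = j} p_e(x) d(w_e x, w_e y) ≤ a·d(x, y)` on each `K_j`. -/
def IsContractive (M : MarkovSystem K N E) (a : ℝ) : Prop :=
  ∀ j : N, ∀ x ∈ M.Kset j, ∀ y ∈ M.Kset j,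
    (∑' e : {e : E // M.i e = j},
        ENNReal.ofReal (M.p e.val x * dist (M.w e.val x) (M.w e.val y)))
      ≤ ENNReal.ofReal (a * dist x y)

/-- `L(x) = ∑_j d(x, x_j)·1_{K_j}(x)`. -/
def Lfun (M : MarkovSystem K N E) (xp : N → K) : K → ℝ≥0∞ :=
  fun x => ∑' j : N, Set.indicator (M.Kset j) (fun y => ENNReal.ofReal (dist y (xp j))) x

/-- `b = sup_j sup_{x ∈ K_j} ∑_{e, i(e) = j} p_e(x)·d(w_e(x_{i(e)}), x_{t(e)})`. -/
def bConst (M : MarkovSystem K N E) (xp : N → K) : ℝ≥0∞ :=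
  ⨆ j : N, ⨆ x ∈ M.Kset j,
    ∑' e : {e : E // M.i e = j},
      ENNReal.ofReal (M.p e.val x * dist (M.w e.val (xp (M.i e.val))) (xp (M.t e.val)))

/-- `P^m_x` evaluated on a word: `p_{e_0}(x)·p_{e_1}(w_{e_0}x)·⋯`. -/
def wordProb (M : MarkovSystem K N E) : List (Option E) → K → ℝ
  | [], _ => 1
  | o :: rest, x => M.pext o x * M.wordProb rest (M.wext o x)

/-- `Λ = Φ(μ)`: `Λ` is a shift-invariant Borel probability measure with
`Λ(_m[e_m, …, e_n]) = ∫ P^m_x(_m[e_m, …, e_n]) dμ(x)` for all cylinders with `m ≤ 0`. -/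
def IsPhiOf (M : MarkovSystem K N E) (μ : Measure K) (Λ : Measure (CodeSpace E)) : Prop :=
  IsProbabilityMeasure Λ ∧ Measure.map (shiftMap E) Λ = Λ ∧
    ∀ m : ℤ, m ≤ 0 → ∀ es : List (Option E),
      Λ (cylSetL m es) = ∫⁻ x, ENNReal.ofReal (M.wordProb es x) ∂μ

/-- The (negative of the) energy function: `-u(σ) = -log p_{σ_1}(F(σ))` on `D`
(`+∞` if `p_{σ_1}(F(σ)) = 0`) and `+∞` off `D`, valued in `[0, ∞]`. -/
def negEnergy (M : MarkovSystem K N E) (j0 : N) (xp : N → K) (σ : CodeSpace E) : ℝ≥0∞ :=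
  if σ ∈ M.codeDomain j0 xp then
    (σ 1).elim ⊤ fun e =>
      if M.p e (M.code j0 xp σ) = 0 then ⊤
      else ENNReal.ofReal (-Real.log (M.p e (M.code j0 xp σ)))
  else ⊤

/-- The free energy `h_S(Λ) + ∫ u dΛ`, as an extended real number. -/
def freeEnergy (M : MarkovSystem K N E) (j0 : N) (xp : N → K)
    (Λ : Measure (CodeSpace E)) : EReal :=
  (entropyS Λ : EReal) - ((∫⁻ σ, M.negEnergy j0 xp σ ∂Λ : ℝ≥0∞) : EReal)

/-- `Λ₀ ∈ E(u)`: `Λ₀` is a thermodynamic equilibrium state for the energy function `u`. -/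
def IsEquilibriumForU (M : MarkovSystem K N E) (j0 : N) (xp : N → K)
    (Λ0 : Measure (CodeSpace E)) : Prop :=
  IsProbabilityMeasure Λ0 ∧ Measure.map (shiftMap E) Λ0 = Λ0 ∧ entropyS Λ0 ≠ ⊤ ∧
    M.freeEnergy j0 xp Λ0 =
      sSup {r : EReal | ∃ Λ : Measure (CodeSpace E),
        IsProbabilityMeasure Λ ∧ Measure.map (shiftMap E) Λ = Λ ∧ entropyS Λ ≠ ⊤ ∧
          r = M.freeEnergy j0 xp Λ}

end MarkovSystem

end


variable {K : Type*} [MetricSpace K] [CompleteSpace K] [MeasurableSpace K] [BorelSpace K]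
  {N E : Type*} [Countable N] [Countable E]

/-! Let `A` be the event that the limit defining `F(σ)` lies in `K_{t(σ_0)}`. It belongs to the past
`𝓕`, and continuity of the maps `w_e` gives `A ⊆ S⁻¹A`; hence `A` is invariant up to null sets, for
every invariant measure carried by `D`, and agrees with `G` up to null sets. Conditioning an
asymptotic state on `A` or on its complement keeps it shift-invariant and does not change the
conditional probabilities given `𝓕`; since `(p̄_e ∘ F)·1_{T_{i(e)}}` equals `p_e ∘ F` on `A` and
`(∂p_e ∘ F)·1_{T_{i(e)}}` off `A`, this yields the decomposition. It is unique because equilibrium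
states give `A` mass one and members of `E_⊥(M)` give it mass zero: on the opposite event every next
symbol would have conditional probability zero. -/

section Measure

open scoped ProbabilityTheory

variable {Ω : Type*} {m m0 : MeasurableSpace Ω} {μ : Measure Ω}

theorem condExp_smul_measure_ae_eq (hm : m ≤ m0) [IsFiniteMeasure μ] {f : Ω → ℝ}
    (hf : Integrable f μ) {c : ℝ≥0∞} (hc : c ≠ ∞) : (c • μ)[f | m] =ᵐ[c • μ] μ[f | m] := by
  have : IsFiniteMeasure (c • μ) := Measure.smul_finite μ hc
  refine (ae_eq_condExp_of_forall_setIntegral_eq hm (hf.smul_measure hc)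
    (fun s _ _ => (integrable_condExp.smul_measure hc).integrableOn) (fun s hs _ => ?_)
    stronglyMeasurable_condExp.aestronglyMeasurable).symm
  rw [Measure.restrict_smul, integral_smul_measure, integral_smul_measure,
    setIntegral_condExp hm hf hs]

theorem condExp_cond_ae_eq (hm : m ≤ m0) [IsFiniteMeasure μ] {f : Ω → ℝ} (hf : Integrable f μ)
    {s : Set Ω} (hs : MeasurableSet[m] s) :
    (μ[|s])[f | m] =ᵐ[μ[|s]] μ[f | m] := by
  by_cases h0 : μ s = 0
  · simp [ProbabilityTheory.cond_eq_zero_of_meas_eq_zero h0, EventuallyEq]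
  · exact (condExp_smul_measure_ae_eq hm hf.integrableOn (ENNReal.inv_ne_top.2 h0)).trans
      (Measure.ae_smul_measure (condExp_restrict_ae_eq_restrict hm hs hf) _)

theorem measure_inter_eq_zero_of_condExp_eq_zero (hm : m ≤ m0) [IsFiniteMeasure μ]
    {A B : Set Ω} (hA : MeasurableSet A) (hB : MeasurableSet[m] B)
    (h : ∀ᵐ ω ∂μ, ω ∈ B → (μ[A.indicator fun _ => (1 : ℝ) | m]) ω = 0) :
    μ (A ∩ B) = 0 := by
  refine (measureReal_eq_zero_iff).1 ?_
  calc μ.real (A ∩ B)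
      = ∫ ω in B, A.indicator (fun _ => (1 : ℝ)) ω ∂μ := by
        rw [← Pi.one_def, integral_indicator_one hA, measureReal_restrict_apply hA]
    _ = ∫ ω in B, (μ[A.indicator fun _ => (1 : ℝ) | m]) ω ∂μ :=
        (setIntegral_condExp hm ((integrable_const 1).indicator hA) hB).symm
    _ = 0 := setIntegral_eq_zero_of_ae_eq_zero h

theorem measure_smul_cond_add_measure_compl_smul_cond [IsFiniteMeasure μ] {s : Set Ω}
    (hs : MeasurableSet s) :
    μ s • μ[|s] + μ sᶜ • μ[|sᶜ] = μ := by
  ext t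
  simpa [mul_comm] using ProbabilityTheory.cond_add_cond_compl_eq (t := t) hs μ

theorem cond_eq_of_eq_smul_add_smul {ν ν' : Measure Ω} {b : ℝ≥0∞} {s : Set Ω}
    (h : μ = μ s • ν + b • ν') (hν : ν sᶜ = 0) (hν' : ν' s = 0) (h0 : μ s ≠ 0) (h1 : μ s ≠ ∞) :
    μ[|s] = ν := by
  have hrestrict : μ.restrict s = μ s • ν := by
    conv_lhs => rw [h]
    rw [Measure.restrict_add, Measure.restrict_smul, Measure.restrict_smul,
      Measure.restrict_eq_zero.2 hν', smul_zero, add_zero,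
      Measure.restrict_eq_self_of_ae_mem (mem_ae_iff.2 hν)]
  rw [ProbabilityTheory.cond, hrestrict, smul_smul, ENNReal.inv_mul_cancel h0 h1, one_smul]

theorem measurePreserving_cond {T : Ω → Ω} (hT : MeasurePreserving T μ μ) {s : Set Ω}
    (hs : MeasurableSet s) (hTs : T ⁻¹' s =ᵐ[μ] s) :
    MeasurePreserving T μ[|s] μ[|s] := by
  have h := hT.restrict_preimage hs
  rw [Measure.restrict_congr_set hTs] at h
  exact h.smul_measure _

theorem iUnion_preimage_iterate_ae_eq {T : Ω → Ω} (hT : Measure.QuasiMeasurePreserving T μ μ)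
    {s t : Set Ω} (hst : s =ᵐ[μ] t) (hTt : T ⁻¹' t =ᵐ[μ] t) :
    (⋃ k : ℕ, T^[k] ⁻¹' s) =ᵐ[μ] t := by
  rw [← Set.iUnion_const (ι := ℕ) t]
  exact Filter.EventuallyEq.countable_iUnion fun k =>
    ((hT.iterate k).preimage_ae_eq hst).trans (hT.preimage_iterate_ae_eq k hTt)

theorem measurableSet_exists_mem_tendsto {X ι : Type*} [TopologicalSpace X]
    [TopologicalSpace.IsCompletelyMetrizableSpace X] [MeasurableSpace X] [BorelSpace X]
    [Countable ι] {l : Filter ι} [l.IsCountablyGenerated] [l.NeBot] {u : ι → Ω → X}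
    (hu : ∀ i, StronglyMeasurable (u i)) {B : Set X} (hB : MeasurableSet B) :
    MeasurableSet {ω | ∃ x ∈ B, Tendsto (u · ω) l (𝓝 x)} := by
  rcases isEmpty_or_nonempty X with hX | hX
  · simp
  convert (StronglyMeasurable.measurableSet_exists_tendsto (l := l) hu).inter
    ((StronglyMeasurable.limUnder (l := l) hu).measurable hB) using 1
  ext ω
  constructor
  · rintro ⟨x, hx, h⟩
    exact ⟨⟨x, h⟩, by rwa [Set.mem_preimage, h.limUnder_eq]⟩
  · rintro ⟨⟨x, h⟩, hx⟩
    exact ⟨x, by rwa [Set.mem_preimage, h.limUnder_eq] at hx, h⟩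

end Measure

section CodeSpace

variable {E : Type*}

instance : DiscreteMeasurableSpace (Option E) := ⟨fun _ => trivial⟩

theorem measurableSet_cylSetL (m : ℤ) (es : List (Option E)) : MeasurableSet (cylSetL m es) := by
  simp only [cylSetL, Set.ofPred_forall]
  exact .iInter fun k => .iInter fun _ => measurable_pi_apply (m + k) (.singleton _)

theorem pastAlgebra_le : pastAlgebra E ≤ MeasurableSpace.pi :=
  MeasurableSpace.generateFrom_le fun _ ⟨es, _, h⟩ => h ▸ measurableSet_cylSetL _ es

theorem measurableSet_coord_eq (n : ℤ) (o : Option E) :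
    MeasurableSet {σ : CodeSpace E | σ n = o} :=
  measurable_pi_apply (X := fun _ : ℤ => Option E) n (.singleton o)

theorem measurable_shiftMap : Measurable (shiftMap E) :=
  measurable_pi_lambda _ fun k => measurable_pi_apply (k + 1)

theorem measurable_pastAlgebra_window [Countable E] (n : ℕ) :
    Measurable[pastAlgebra E] fun (σ : CodeSpace E) (k : Fin (n + 1)) => σ (k - n) := by
  refine @measurable_to_countable' _ _ _ _ (pastAlgebra E) _ fun es => ?_
  refine MeasurableSpace.measurableSet_generateFrom
    ⟨List.ofFn es, by simp, ?_⟩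
  ext σ
  simp only [cylSetL, Set.mem_preimage, Set.mem_singleton_iff, Set.mem_ofPred_eq, funext_iff,
    Fin.forall_iff, List.length_ofFn, List.get_ofFn]
  refine forall₂_congr fun k hk => ?_
  rw [show (1 - ((n + 1 : ℕ) : ℤ) + k) = k - n by omega]
  rfl

theorem stronglyMeasurable_pastAlgebra_of_dependsOn [Countable E] {X : Type*}
    [TopologicalSpace X] {f : CodeSpace E → X} {n : ℕ} (hf : DependsOn f (Set.Icc (-(n : ℤ)) 0)) :
    StronglyMeasurable[pastAlgebra E] f := by
  have hfactor : f.FactorsThrough fun (σ : CodeSpace E) (k : Fin (n + 1)) => σ (k - n) := by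
    refine fun σ τ h => hf fun k hk => ?_
    have := congrFun h ⟨(k + n).toNat, by grind⟩
    grind
  have : Nonempty X := ⟨f fun _ => none⟩
  obtain ⟨g, rfl⟩ := (Function.factorsThrough_iff f).1 hfactor
  exact StronglyMeasurable.of_discrete.comp_measurable (measurable_pastAlgebra_window n)

theorem measurableSet_pastAlgebra_coord_zero [Countable E] (s : Set (Option E)) :
    MeasurableSet[pastAlgebra E] {σ : CodeSpace E | σ 0 ∈ s} := by
  simpa using measurable_pastAlgebra_window 0 (.of_discrete (s := {g | g 0 ∈ s}))

end CodeSpace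

section CodeState

open scoped ProbabilityTheory

variable {E : Type*} {D B : Set (CodeSpace E)} {g g' : E → CodeSpace E → ℝ}
  {Λ : Measure (CodeSpace E)}

/-- Shift-invariant probability measures on the code space that are carried by `D` and under which
the next symbol is `e` with conditional probability `g e` given the past. The classes `E(M)`,
`Ẽ(M)` and `E_⊥(M)` are definitionally of this form and differ only in `g`. -/
def IsCodeState (D : Set (CodeSpace E)) (g : E → CodeSpace E → ℝ) (Λ : Measure (CodeSpace E)) :
    Prop :=
  IsProbabilityMeasure Λ ∧ Measure.map (shiftMap E) Λ = Λ ∧ Λ D = 1 ∧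
    ∀ e : E,
      (Λ[Set.indicator {σ : CodeSpace E | σ 1 = some e} (fun _ => (1 : ℝ)) | pastAlgebra E])
        =ᵐ[Λ] g e

namespace IsCodeState

theorem isProbabilityMeasure (h : IsCodeState D g Λ) : IsProbabilityMeasure Λ := h.1

theorem measurePreserving_shiftMap (h : IsCodeState D g Λ) :
    MeasurePreserving (shiftMap E) Λ Λ :=
  ⟨measurable_shiftMap, h.2.1⟩

theorem ae_mem (h : IsCodeState D g Λ) (hD : MeasurableSet D) : ∀ᵐ σ ∂Λ, σ ∈ D :=
  have := h.isProbabilityMeasure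
  (mem_ae_iff_prob_eq_one hD).2 h.2.2.1

theorem condExp_ae_eq (h : IsCodeState D g Λ) (e : E) :
    (Λ[Set.indicator {σ : CodeSpace E | σ 1 = some e} (fun _ => (1 : ℝ)) | pastAlgebra E])
      =ᵐ[Λ] g e :=
  h.2.2.2 e

theorem cond_or_eq_zero (h : IsCodeState D g Λ) (hD : MeasurableSet D)
    (hB : MeasurableSet[pastAlgebra E] B) (hSB : shiftMap E ⁻¹' B =ᵐ[Λ] B)
    (hgg' : ∀ σ ∈ D, σ ∈ B → ∀ e, g e σ = g' e σ) :
    IsCodeState D g' Λ[|B] ∨ Λ[|B] = 0 := by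
  have := h.isProbabilityMeasure
  have hB' : MeasurableSet B := pastAlgebra_le _ hB
  have hac : Λ[|B] ≪ Λ := ProbabilityTheory.cond_absolutelyContinuous
  by_cases h0 : Λ B = 0
  · exact .inr (ProbabilityTheory.cond_eq_zero_of_meas_eq_zero h0)
  have hprob : IsProbabilityMeasure Λ[|B] := ProbabilityTheory.cond_isProbabilityMeasure h0
  have hDB : ∀ᵐ σ ∂Λ[|B], σ ∈ D := hac.ae_le (h.ae_mem hD)
  refine .inl ⟨hprob, (measurePreserving_cond h.measurePreserving_shiftMap hB' hSB).map_eq,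
    (mem_ae_iff_prob_eq_one hD).1 hDB, fun e => ?_⟩
  have hcond := condExp_cond_ae_eq pastAlgebra_le (μ := Λ)
    ((integrable_const (1 : ℝ)).indicator (measurableSet_coord_eq 1 (some e))) hB
  filter_upwards [hcond, hac.ae_le (h.condExp_ae_eq e), hDB, ProbabilityTheory.ae_cond_mem hB']
    with σ hσcond hσg hσD hσB
  rw [hσcond, hσg, hgg' σ hσD hσB e]

end IsCodeState

end CodeState

namespace MarkovSystem

variable {K : Type*} [MetricSpace K] [MeasurableSpace K] {N E : Type*}
  (M : MarkovSystem K N E) {j0 : N} {xp : N → K} {σ : CodeSpace E}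

theorem exists_coord_of_mem_pathSpace (hσ : σ ∈ M.pathSpace) :
    ∃ e e' : E, σ 0 = some e ∧ σ 1 = some e' ∧ M.i e' = M.t e := by
  simpa using hσ 0

theorem mem_Tset_iff (hσ : σ ∈ M.pathSpace) {e : E} (he : σ 0 = some e) {j : N} :
    σ ∈ M.Tset j ↔ M.t e = j := by
  simp [Tset, hσ, he]

theorem mem_Kset_iff {x : K} {j k : N} (hx : x ∈ M.Kset j) : x ∈ M.Kset k ↔ j = k :=
  ⟨fun h => by_contra fun hjk => Set.disjoint_left.1 (M.Kset_disjoint hjk) hx h,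
    fun h => h ▸ hx⟩

section Orbit

theorem dependsOn_iterW (n : ℕ) (y : K) :
    DependsOn (fun σ : CodeSpace E => M.iterW σ n y) (Set.Icc (-(n : ℤ)) 0) := by
  induction n generalizing y with
  | zero => exact fun σ τ h => by simp only [iterW, h 0 (by simp)]
  | succ n ih =>
    intro σ τ h
    have hlast : σ (-(n + 1 : ℤ)) = τ (-(n + 1 : ℤ)) := h _ (by grind)
    simp only [iterW, hlast]
    exact ih _ fun k hk => h k (by grind)

theorem dependsOn_orbit (n : ℕ) :
    DependsOn (fun σ : CodeSpace E => M.orbit j0 xp σ n) (Set.Icc (-(n : ℤ)) 0) := by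
  intro σ τ h
  simp only [orbit, h (-(n : ℤ)) (by simp)]
  exact M.dependsOn_iterW n _ h

theorem stronglyMeasurable_orbit [Countable E] (n : ℕ) :
    StronglyMeasurable[pastAlgebra E] fun σ : CodeSpace E => M.orbit j0 xp σ n :=
  stronglyMeasurable_pastAlgebra_of_dependsOn (M.dependsOn_orbit n)

theorem iterW_shiftMap (σ : CodeSpace E) (n : ℕ) (y : K) :
    M.iterW (shiftMap E σ) (n + 1) y = M.wext (σ 1) (M.iterW σ n y) := by
  induction n generalizing y with
  | zero => simp [iterW, shiftMap]
  | succ n ih =>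
    rw [iterW, ih, iterW]
    congr 3

theorem orbit_shiftMap (σ : CodeSpace E) (n : ℕ) :
    M.orbit j0 xp (shiftMap E σ) (n + 1) = M.wext (σ 1) (M.orbit j0 xp σ n) := by
  rw [orbit, iterW_shiftMap, orbit]
  simp [shiftMap]

theorem iterW_mem_Kset (hσ : σ ∈ M.pathSpace) (n : ℕ) {e e' : E}
    (he : σ 0 = some e) (he' : σ (-(n : ℤ)) = some e') {y : K} (hy : y ∈ M.Kset (M.i e')) :
    M.iterW σ n y ∈ M.Kset (M.t e) := by
  induction n generalizing y e' with
  | zero =>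
    obtain rfl : e = e' := by simpa [he] using he'
    simpa [iterW, he, wext] using M.w_mapsTo e hy
  | succ n ih =>
    obtain ⟨a, b, ha, hb, hab⟩ := hσ (-((n : ℤ) + 1))
    rw [Nat.cast_succ] at he'
    obtain rfl : a = e' := Option.some_injective _ (ha.symm.trans he')
    rw [show -((n : ℤ) + 1) + 1 = -(n : ℤ) by ring] at hb
    rw [iterW, he']
    exact ih hb (hab ▸ M.w_mapsTo a hy)

theorem orbit_mem_Kset (hxp : ∀ j, xp j ∈ M.Kset j) (hσ : σ ∈ M.pathSpace) {e : E}
    (he : σ 0 = some e) (n : ℕ) : M.orbit j0 xp σ n ∈ M.Kset (M.t e) := by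
  obtain ⟨a, _, ha, -, -⟩ := hσ (-(n : ℤ))
  rw [orbit, ha]
  exact M.iterW_mem_Kset hσ n he ha (hxp _)

theorem tendsto_orbit_code (hσ : σ ∈ M.codeDomain j0 xp) :
    Tendsto (M.orbit j0 xp σ) atTop (𝓝 (M.code j0 xp σ)) := by
  rw [code, dif_pos hσ]
  exact hσ.2.choose_spec

end Orbit

/-- The codes whose orbit converges to a point of `K_{t(σ_0)}`. On `D` this is the event
`F(σ) ∈ K_{t(σ_0)}`; phrasing it by convergence of the orbit instead of `F` and `Σ_G`, which look at
all coordinates, makes it measurable with respect to the past. -/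
def regularSet (j0 : N) (xp : N → K) : Set (CodeSpace E) :=
  {σ | ∃ e : E, σ 0 = some e ∧
    ∃ x ∈ M.Kset (M.t e), Tendsto (M.orbit j0 xp σ) atTop (𝓝 x)}

section RegularSet

theorem mem_regularSet_iff (hσ : σ ∈ M.codeDomain j0 xp) {e : E} (he : σ 0 = some e) :
    σ ∈ M.regularSet j0 xp ↔ M.code j0 xp σ ∈ M.Kset (M.t e) := by
  constructor
  · rintro ⟨a, ha, x, hx, h⟩
    obtain rfl : e = a := by simpa [he] using ha
    rwa [tendsto_nhds_unique (M.tendsto_orbit_code hσ) h]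
  · exact fun h => ⟨e, he, _, h, M.tendsto_orbit_code hσ⟩

theorem mem_regularSet_iff_code_mem_Kset (hσ : σ ∈ M.codeDomain j0 xp) {j : N}
    (hj : σ ∈ M.Tset j) : σ ∈ M.regularSet j0 xp ↔ M.code j0 xp σ ∈ M.Kset j := by
  obtain ⟨-, e, he, rfl⟩ := hj
  exact M.mem_regularSet_iff hσ he

theorem mem_iUnion_code_preimage_inter_Tset_iff (hσ : σ ∈ M.codeDomain j0 xp) :
    σ ∈ (⋃ j : N, M.code j0 xp ⁻¹' M.Kset j ∩ M.Tset j) ↔ σ ∈ M.regularSet j0 xp := by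
  obtain ⟨e, -, he, -, -⟩ := M.exists_coord_of_mem_pathSpace hσ.1
  simp [M.mem_regularSet_iff hσ he, M.mem_Tset_iff hσ.1 he]

/-- The new limit `w_{σ_1}(F(σ))` lies in `K_{t(σ_1)}` because `w_{σ_1}` is continuous at `F(σ)`
within the cell `K_{i(σ_1)}`, which contains the whole orbit of `σ`. -/
theorem shiftMap_mem_regularSet (hw : ∀ e, ContinuousOn (M.w e) (M.Kset (M.i e)))
    (hxp : ∀ j, xp j ∈ M.Kset j) (hσ : σ ∈ M.codeDomain j0 xp) (h : σ ∈ M.regularSet j0 xp) :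
    shiftMap E σ ∈ M.regularSet j0 xp := by
  obtain ⟨e, e', he, he', hee'⟩ := M.exists_coord_of_mem_pathSpace hσ.1
  rw [M.mem_regularSet_iff hσ he, ← hee'] at h
  refine ⟨e', he', M.w e' (M.code j0 xp σ), M.w_mapsTo e' h, ?_⟩
  have hwithin : Tendsto (M.orbit j0 xp σ) atTop (𝓝[M.Kset (M.i e')] M.code j0 xp σ) :=
    tendsto_nhdsWithin_iff.2 ⟨M.tendsto_orbit_code hσ,
      .of_forall fun n => hee' ▸ M.orbit_mem_Kset hxp hσ.1 he n⟩
  rw [← tendsto_add_atTop_iff_nat 1]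
  simp only [orbit_shiftMap, he']
  exact (hw e' _ h).tendsto.comp hwithin

end RegularSet

section Measurability

variable [Countable E]

theorem measurableSet_pathSpace : MeasurableSet M.pathSpace := by
  simp only [pathSpace, Set.ofPred_forall, Set.ofPred_exists]
  exact .iInter fun n => .iUnion fun e => .iUnion fun e' =>
    (measurableSet_coord_eq n _).inter ((measurableSet_coord_eq (n + 1) _).inter (.const _))

variable [CompleteSpace K]

theorem measurableSet_codeDomain : MeasurableSet (M.codeDomain j0 xp) :=
  M.measurableSet_pathSpace.inter (pastAlgebra_le _
    (@StronglyMeasurable.measurableSet_exists_tendsto _ _ _ (pastAlgebra E) _ _ _ _ _ _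
      M.stronglyMeasurable_orbit))

variable [BorelSpace K]

theorem measurableSet_regularSet : MeasurableSet[pastAlgebra E] (M.regularSet j0 xp) := by
  simp only [regularSet, Set.ofPred_exists]
  exact .iUnion fun e => (measurableSet_pastAlgebra_coord_zero {some e}).inter
    (measurableSet_exists_mem_tendsto M.stronglyMeasurable_orbit (M.Kset_measurable _))

end Measurability

section ExtendedProbability

variable {M} {pbar : E → K → ℝ}

theorem IsUCExtensionP.dp_eq (hpbar : M.IsUCExtensionP pbar) {e : E} {x : K}
    (hx : x ∉ M.Kset (M.i e)) : M.dp pbar e x = pbar e x := by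
  by_cases hcl : x ∈ closure (M.Kset (M.i e))
  · exact Set.indicator_of_mem (Set.mem_sdiff_of_mem hcl hx) _
  · rw [dp, Set.indicator_of_notMem fun h => hcl h.1, (hpbar e).2.2 x hcl]

theorem IsUCExtensionP.indicator_Tset_eq_p (hpbar : M.IsUCExtensionP pbar)
    (hσ : σ ∈ M.codeDomain j0 xp) (h : σ ∈ M.regularSet j0 xp) (e : E) :
    (M.Tset (M.i e)).indicator (fun τ => pbar e (M.code j0 xp τ)) σ =
      M.p e (M.code j0 xp σ) := by
  by_cases hT : σ ∈ M.Tset (M.i e)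
  · rw [Set.indicator_of_mem hT,
      (hpbar e).2.1 _ ((M.mem_regularSet_iff_code_mem_Kset hσ hT).1 h)]
  · obtain ⟨a, -, ha, -, -⟩ := M.exists_coord_of_mem_pathSpace hσ.1
    rw [Set.indicator_of_notMem hT, M.p_zero_outside]
    rwa [M.mem_Kset_iff ((M.mem_regularSet_iff hσ ha).1 h), ← M.mem_Tset_iff hσ.1 ha]

theorem IsUCExtensionP.indicator_Tset_eq_indicator_Tset_dp (hpbar : M.IsUCExtensionP pbar)
    (hσ : σ ∈ M.codeDomain j0 xp) (h : σ ∉ M.regularSet j0 xp) (e : E) :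
    (M.Tset (M.i e)).indicator (fun τ => pbar e (M.code j0 xp τ)) σ =
      (M.Tset (M.i e)).indicator (fun τ => M.dp pbar e (M.code j0 xp τ)) σ := by
  by_cases hT : σ ∈ M.Tset (M.i e)
  · rw [Set.indicator_of_mem hT, Set.indicator_of_mem hT,
      hpbar.dp_eq ((M.mem_regularSet_iff_code_mem_Kset hσ hT).not.1 h)]
  · rw [Set.indicator_of_notMem hT, Set.indicator_of_notMem hT]

end ExtendedProbability

section Support

variable [Countable E] {D B : Set (CodeSpace E)} {g : E → CodeSpace E → ℝ}
  {Λ : Measure (CodeSpace E)}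

/-- Almost surely some symbol `e` occurs next, and it satisfies `i(e) = t(σ_0)`. -/
theorem measure_eq_zero_of_forall_mem_Tset (hΛ : IsCodeState D g Λ) (hD : MeasurableSet D)
    (hDM : D ⊆ M.pathSpace) (hB : MeasurableSet[pastAlgebra E] B)
    (hg : ∀ e, ∀ σ ∈ D, σ ∈ B → σ ∈ M.Tset (M.i e) → g e σ = 0) : Λ B = 0 := by
  have := hΛ.isProbabilityMeasure
  let pred (e : E) : Set (CodeSpace E) := {σ | σ 0 ∈ some '' {a | M.t a = M.i e}}
  have hnull (e : E) : Λ ({σ | σ 1 = some e} ∩ (pred e ∩ B)) = 0 := by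
    refine measure_inter_eq_zero_of_condExp_eq_zero pastAlgebra_le (measurableSet_coord_eq 1 _)
      ((measurableSet_pastAlgebra_coord_zero _).inter hB) ?_
    filter_upwards [hΛ.condExp_ae_eq e, hΛ.ae_mem hD] with σ hcond hσ
    rintro ⟨⟨a, hae, ha⟩, hσB⟩
    rw [hcond, hg e σ hσ hσB ((M.mem_Tset_iff (hDM hσ) ha.symm).2 hae)]
  refine measure_mono_null_ae ?_ (measure_iUnion_null hnull)
  filter_upwards [hΛ.ae_mem hD] with σ hσ hσB
  obtain ⟨e, e', he, he', hee'⟩ := M.exists_coord_of_mem_pathSpace (hDM hσ)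
  exact Set.mem_iUnion.2 ⟨e', he', ⟨e, hee'.symm, he.symm⟩, hσB⟩

variable [CompleteSpace K] [BorelSpace K]

variable {M} in
theorem IsEquilibrium.measure_compl_regularSet (hΛ : M.IsEquilibrium j0 xp Λ) :
    Λ (M.regularSet j0 xp)ᶜ = 0 := by
  refine M.measure_eq_zero_of_forall_mem_Tset hΛ M.measurableSet_codeDomain (fun _ h => h.1)
    M.measurableSet_regularSet.compl fun e σ hσ hσA hT => ?_
  exact M.p_zero_outside _ _ ((M.mem_regularSet_iff_code_mem_Kset hσ hT).not.1 hσA)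

variable {M} in
theorem IsPerp.measure_regularSet {pbar : E → K → ℝ} (hΛ : M.IsPerp j0 xp pbar Λ) :
    Λ (M.regularSet j0 xp) = 0 := by
  refine M.measure_eq_zero_of_forall_mem_Tset hΛ M.measurableSet_codeDomain (fun _ h => h.1)
    M.measurableSet_regularSet fun e σ hσ hσA hT => ?_
  rw [Set.indicator_of_mem hT, dp, Set.indicator_of_notMem fun h =>
    h.2 ((M.mem_regularSet_iff_code_mem_Kset hσ hT).1 hσA)]

end Support

section State

variable [Countable E] [CompleteSpace K] [BorelSpace K] {g : E → CodeSpace E → ℝ}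
  {Λ : Measure (CodeSpace E)}

theorem shiftMap_preimage_regularSet_ae_eq (hw : ∀ e, ContinuousOn (M.w e) (M.Kset (M.i e)))
    (hxp : ∀ j, xp j ∈ M.Kset j) (hΛ : IsCodeState (M.codeDomain j0 xp) g Λ) :
    shiftMap E ⁻¹' M.regularSet j0 xp =ᵐ[Λ] M.regularSet j0 xp := by
  have := hΛ.isProbabilityMeasure
  have hA : NullMeasurableSet (M.regularSet j0 xp) Λ :=
    (pastAlgebra_le _ M.measurableSet_regularSet).nullMeasurableSet
  refine (ae_eq_of_ae_subset_of_measure_ge ?_ ?_ hA (measure_ne_top _ _)).symm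
  · filter_upwards [hΛ.ae_mem M.measurableSet_codeDomain] with σ hσ h
    exact M.shiftMap_mem_regularSet hw hxp hσ h
  · exact (hΛ.measurePreserving_shiftMap.measure_preimage hA).le

theorem Gset_ae_eq_regularSet (hw : ∀ e, ContinuousOn (M.w e) (M.Kset (M.i e)))
    (hxp : ∀ j, xp j ∈ M.Kset j) (hΛ : IsCodeState (M.codeDomain j0 xp) g Λ) :
    M.Gset j0 xp =ᵐ[Λ] M.regularSet j0 xp := by
  have hunion : (⋃ j : N, M.code j0 xp ⁻¹' M.Kset j ∩ M.Tset j) =ᵐ[Λ] M.regularSet j0 xp := by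
    filter_upwards [hΛ.ae_mem M.measurableSet_codeDomain] with σ hσ
    exact propext (M.mem_iUnion_code_preimage_inter_Tset_iff hσ)
  simpa only [Gset, Set.preimage_iUnion] using iUnion_preimage_iterate_ae_eq
    hΛ.measurePreserving_shiftMap.quasiMeasurePreserving hunion
    (M.shiftMap_preimage_regularSet_ae_eq hw hxp hΛ)

open scoped ProbabilityTheory

variable {M} {pbar : E → K → ℝ}

theorem IsAsymptotic.isEquilibrium_cond_or_eq_zero (hΛ : M.IsAsymptotic j0 xp pbar Λ)
    (hw : ∀ e, ContinuousOn (M.w e) (M.Kset (M.i e))) (hxp : ∀ j, xp j ∈ M.Kset j)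
    (hpbar : M.IsUCExtensionP pbar) :
    M.IsEquilibrium j0 xp Λ[|M.regularSet j0 xp] ∨ Λ[|M.regularSet j0 xp] = 0 :=
  IsCodeState.cond_or_eq_zero hΛ M.measurableSet_codeDomain M.measurableSet_regularSet
    (M.shiftMap_preimage_regularSet_ae_eq hw hxp hΛ)
    fun _ hσ h e => hpbar.indicator_Tset_eq_p hσ h e

theorem IsAsymptotic.isPerp_cond_compl_or_eq_zero (hΛ : M.IsAsymptotic j0 xp pbar Λ)
    (hw : ∀ e, ContinuousOn (M.w e) (M.Kset (M.i e))) (hxp : ∀ j, xp j ∈ M.Kset j)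
    (hpbar : M.IsUCExtensionP pbar) :
    M.IsPerp j0 xp pbar Λ[|(M.regularSet j0 xp)ᶜ] ∨ Λ[|(M.regularSet j0 xp)ᶜ] = 0 :=
  IsCodeState.cond_or_eq_zero hΛ M.measurableSet_codeDomain M.measurableSet_regularSet.compl
    (M.shiftMap_preimage_regularSet_ae_eq hw hxp hΛ).compl
    fun _ hσ h e => hpbar.indicator_Tset_eq_indicator_Tset_dp hσ h e

end State

end MarkovSystem

open scoped ProbabilityTheory in
theorem asymptotic_state_decomposition_general
    {K : Type*} [MetricSpace K] [CompleteSpace K] [MeasurableSpace K] [BorelSpace K]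
    {N E : Type*} [Countable E]
    (M : MarkovSystem K N E) (j0 : N) (xp : N → K) (hxp : ∀ j, xp j ∈ M.Kset j)
    (hw : ∀ e, ContinuousOn (M.w e) (M.Kset (M.i e)))
    (pbar : E → K → ℝ) (hpbar : M.IsUCExtensionP pbar)
    (Λ0 : Measure (CodeSpace E)) (hΛ0 : M.IsAsymptotic j0 xp pbar Λ0) :
    ∃ Λ Λp : Measure (CodeSpace E),
      (M.IsEquilibrium j0 xp Λ ∨ Λ = 0) ∧ (M.IsPerp j0 xp pbar Λp ∨ Λp = 0) ∧
      Λ0 = Λ0 (M.Gset j0 xp) • Λ + (1 - Λ0 (M.Gset j0 xp)) • Λp ∧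
      (0 < Λ0 (M.Gset j0 xp) → Λ0 (M.Gset j0 xp) < 1 →
        ∀ Λ' Λp' : Measure (CodeSpace E),
          (M.IsEquilibrium j0 xp Λ' ∨ Λ' = 0) → (M.IsPerp j0 xp pbar Λp' ∨ Λp' = 0) →
          Λ0 = Λ0 (M.Gset j0 xp) • Λ' + (1 - Λ0 (M.Gset j0 xp)) • Λp' →
          Λ' = Λ ∧ Λp' = Λp) := by
  have := IsCodeState.isProbabilityMeasure hΛ0
  have hA : MeasurableSet (M.regularSet j0 xp) := pastAlgebra_le _ M.measurableSet_regularSet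
  rw [measure_congr (M.Gset_ae_eq_regularSet hw hxp hΛ0), ← prob_compl_eq_one_sub hA]
  refine ⟨_, _, hΛ0.isEquilibrium_cond_or_eq_zero hw hxp hpbar,
    hΛ0.isPerp_cond_compl_or_eq_zero hw hxp hpbar,
    (measure_smul_cond_add_measure_compl_smul_cond hA).symm,
    fun hpos hlt Λ' Λp' hΛ' hΛp' h => ?_⟩
  have hΛ'A : Λ' (M.regularSet j0 xp)ᶜ = 0 :=
    hΛ'.elim (·.measure_compl_regularSet) (by simp [·])
  have hΛp'A : Λp' (M.regularSet j0 xp) = 0 :=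
    hΛp'.elim (·.measure_regularSet) (by simp [·])
  have hcompl : Λ0 (M.regularSet j0 xp)ᶜ ≠ 0 := by
    rw [Ne, prob_compl_eq_zero_iff hA]
    exact hlt.ne
  exact ⟨(cond_eq_of_eq_smul_add_smul h hΛ'A hΛp'A hpos.ne' (measure_ne_top _ _)).symm,
    (cond_eq_of_eq_smul_add_smul (h.trans (add_comm _ _)) (by rwa [compl_compl]) hΛ'A hcompl
      (measure_ne_top _ _)).symm⟩

/-- If `M` is uniformly continuous and `M ∈ Ẽ(M)`, then there exist
`Λ ∈ E(M) ∪ {0}` and `Λ_⊥ ∈ E_⊥(M) ∪ {0}` with `M = M(G)·Λ + (1 − M(G))·Λ_⊥`, and the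
decomposition is unique if `0 < M(G) < 1`. -/
theorem asymptotic_state_decomposition
    (M : MarkovSystem K N E) (j0 : N) (xp : N → K) (hxp : ∀ j, xp j ∈ M.Kset j)
    (huc : M.IsUniformlyContinuous)
    (pbar : E → K → ℝ) (hpbar : M.IsUCExtensionP pbar)
    (Λ0 : Measure (CodeSpace E)) (hΛ0 : M.IsAsymptotic j0 xp pbar Λ0) :
    ∃ Λ Λp : Measure (CodeSpace E),
      (M.IsEquilibrium j0 xp Λ ∨ Λ = 0) ∧ (M.IsPerp j0 xp pbar Λp ∨ Λp = 0) ∧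
      Λ0 = Λ0 (M.Gset j0 xp) • Λ + (1 - Λ0 (M.Gset j0 xp)) • Λp ∧
      (0 < Λ0 (M.Gset j0 xp) → Λ0 (M.Gset j0 xp) < 1 →
        ∀ Λ' Λp' : Measure (CodeSpace E),
          (M.IsEquilibrium j0 xp Λ' ∨ Λ' = 0) → (M.IsPerp j0 xp pbar Λp' ∨ Λp' = 0) →
          Λ0 = Λ0 (M.Gset j0 xp) • Λ' + (1 - Λ0 (M.Gset j0 xp)) • Λp' →
          Λ' = Λ ∧ Λp' = Λp) :=
  asymptotic_state_decomposition_general M j0 xp hxp (fun e => (huc e).1.continuousOn) pbar hpbar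
    Λ0 hΛ0
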